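/- For every integer k ≥ 2 and every integer n = (2k−1)m + 1 with m > 1, there exists a simple k-k-AND-BN on n nodes for which the size of the minimum control node set is (k−1)m + 1 = ((k−1)/(2k−1))·(n−1) + 1. -/

import Mathlib

namespace BN

variable {n : ℕ}

/-- The Boolean function `f` depends on input `j`. -/
def Depends (f : (Fin n → Bool) → Bool) (j : Fin n) : Prop :=
  ∃ x : Fin n → Bool, f (Function.update x j (!(x j))) ≠ f x

/-- The set of incoming nodes of node `i` (Γ⁻). -/
def inSet (F : Fin n → (Fin n → Bool) → Bool) (i : Fin n) : Set (Fin n) :=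
  {j | Depends (F i) j}

/-- The set of outgoing nodes of node `i` (Γ⁺). -/
def outSet (F : Fin n → (Fin n → Bool) → Bool) (i : Fin n) : Set (Fin n) :=
  {j | Depends (F j) i}

/-- The controlled trajectory: nodes in `U` get an xor-control signal. -/
def traj (F : Fin n → (Fin n → Bool) → Bool) (U : Finset (Fin n))
    (u : ℕ → Fin n → Bool) (x0 : Fin n → Bool) : ℕ → Fin n → Bool
  | 0 => x0
  | t + 1 => fun i =>
      if i ∈ U then Bool.xor (u t i) (F i (traj F U u x0 t))
      else F i (traj F U u x0 t)

/-- `U` is a control node set: any initial state can be driven to any target state. -/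
def IsControlSet (F : Fin n → (Fin n → Bool) → Bool) (U : Finset (Fin n)) : Prop :=
  ∀ x0 xT : Fin n → Bool, ∃ t : ℕ, 1 ≤ t ∧ ∃ u : ℕ → Fin n → Bool, traj F U u x0 t = xT

/-- AND of the inputs in `S` (no negations). -/
def andFun (S : Finset (Fin n)) (x : Fin n → Bool) : Bool :=
  decide (∀ j ∈ S, x j = true)

/-- `f` is the conjunction of `k` distinct inputs (no negations). -/
def IsSimpleKAnd (k : ℕ) (f : (Fin n → Bool) → Bool) : Prop :=
  ∃ S : Finset (Fin n), S.card = k ∧ f = andFun S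

/-- A simple `k`-`k`-AND-BN: each function is a `k`-input AND (no negations) and
every node has indegree `k` and outdegree `k`. -/
def IsSimpleKKAndBN (k : ℕ) (F : Fin n → (Fin n → Bool) → Bool) : Prop :=
  (∀ i, IsSimpleKAnd k (F i)) ∧ ∀ i, (inSet F i).ncard = k ∧ (outSet F i).ncard = k

theorem andFun_eq_true {S : Finset (Fin n)} {x : Fin n → Bool} :
    andFun S x = true ↔ ∀ j ∈ S, x j = true := by
  simp [andFun]

theorem andFun_eq_false {S : Finset (Fin n)} {x : Fin n → Bool} :
    andFun S x = false ↔ ∃ j ∈ S, x j = false := by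
  simp [andFun]

theorem depends_andFun {S : Finset (Fin n)} {j : Fin n} : Depends (andFun S) j ↔ j ∈ S := by
  constructor
  · rintro ⟨x, hx⟩
    by_contra hj
    refine hx ?_
    unfold andFun
    refine decide_eq_decide.mpr (forall₂_congr fun i hi => ?_)
    rw [Function.update_of_ne (ne_of_mem_of_not_mem hi hj)]
  · intro hj
    refine ⟨fun _ => true, ?_⟩
    have h1 : andFun S (fun _ => true) = true := andFun_eq_true.mpr fun _ _ => rfl
    have h2 : andFun S (Function.update (fun _ => true) j (!true)) = false :=
      andFun_eq_false.mpr ⟨j, hj, by simp⟩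
    rw [h1, h2]
    simp

/-- An AND-network given by its input sets is a simple `k`-`k`-AND-BN as soon as all input sets
and all output sets have `k` elements. -/
theorem isSimpleKKAndBN_andFun {k : ℕ} {S : Fin n → Finset (Fin n)}
    (hin : ∀ i, (S i).card = k) (hout : ∀ j, (Finset.univ.filter fun i => j ∈ S i).card = k) :
    IsSimpleKKAndBN k fun i => andFun (S i) := by
  refine ⟨fun i => ⟨S i, hin i, rfl⟩, fun i => ⟨?_, ?_⟩⟩
  · have : inSet (fun i => andFun (S i)) i = ↑(S i) := by
      ext j
      simp [inSet, depends_andFun]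
    rw [this, Set.ncard_coe_finset, hin]
  · have : outSet (fun i => andFun (S i)) i = ↑(Finset.univ.filter fun j => i ∈ S j) := by
      ext j
      simp [outSet, depends_andFun]
    rw [this, Set.ncard_coe_finset, hout]

/-- In a controllable AND-network every uncontrolled node has an input that feeds no other
uncontrolled node. -/
theorem IsControlSet.exists_private {S : Fin n → Finset (Fin n)} {U : Finset (Fin n)}
    (hU : IsControlSet (fun i => andFun (S i)) U) {i : Fin n} (hi : i ∉ U) :
    ∃ q ∈ S i, ∀ j ∉ U, q ∈ S j → j = i := by
  obtain ⟨t, ht, u, h⟩ := hU (fun _ => true) (Function.update (fun _ => true) i false)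
  obtain ⟨s, rfl⟩ := Nat.exists_eq_add_of_le' ht
  have key : ∀ j ∉ U, andFun (S j) (traj (fun i => andFun (S i)) U u (fun _ => true) s) =
      Function.update (fun _ => true) i false j := fun j hj => by
    simpa [traj, hj] using congrFun h j
  have hzero := key i hi
  rw [Function.update_self, andFun_eq_false] at hzero
  obtain ⟨q, hq, hq0⟩ := hzero
  refine ⟨q, hq, fun j hj hqj => ?_⟩
  by_contra hji
  have hone := key j hj
  rw [Function.update_of_ne hji, andFun_eq_true] at hone
  simpa [hq0] using hone q hqj

/-- Double counting of the edges from private inputs to controlled nodes. -/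
theorem IsControlSet.card_compl_mul_le {K : ℕ} {S : Fin n → Finset (Fin n)} {U : Finset (Fin n)}
    (hU : IsControlSet (fun i => andFun (S i)) U) (hin : ∀ i, (S i).card = K + 1)
    (hout : ∀ j, (Finset.univ.filter fun i => j ∈ S i).card = K + 1) :
    Uᶜ.card * K ≤ U.card * (K + 1) := by
  have hp : ∀ i, ∃ q, i ∉ U → q ∈ S i ∧ ∀ j ∉ U, q ∈ S j → j = i := fun i => by
    by_cases hi : i ∈ U
    · exact ⟨i, fun h => absurd hi h⟩
    · obtain ⟨q, hq⟩ := hU.exists_private hi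
      exact ⟨q, fun _ => hq⟩
  choose p hp using hp
  refine Finset.card_mul_le_card_mul (fun i j => p i ∈ S j) (fun i hi => ?_) fun j _ => ?_
  · rw [Finset.mem_compl] at hi
    have hsub : (Finset.univ.filter fun j => p i ∈ S j) ⊆
        insert i (Finset.bipartiteAbove (fun i j => p i ∈ S j) U i) := fun j hj => by
      rw [Finset.mem_filter] at hj
      by_cases hjU : j ∈ U
      · exact Finset.mem_insert_of_mem (Finset.mem_filter.mpr ⟨hjU, hj.2⟩)
      · exact Finset.mem_insert.mpr (Or.inl ((hp i hi).2 j hjU hj.2))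
    have := (Finset.card_le_card hsub).trans (Finset.card_insert_le _ _)
    rw [hout] at this
    omega
  · rw [← hin j]
    refine Finset.card_le_card_of_injOn p (fun i hi => ?_) fun i hi i' hi' h => ?_
    · exact (Finset.mem_filter.mp hi).2
    · have hiU := Finset.mem_compl.mp (Finset.mem_filter.mp hi).1
      have hiU' := Finset.mem_compl.mp (Finset.mem_filter.mp hi').1
      exact (hp i' hiU').2 i hiU (h ▸ (hp i hiU).1)

/-- The state `y` can be reached from `x` after at least one step. -/
def Reaches (F : Fin n → (Fin n → Bool) → Bool) (U : Finset (Fin n)) (x y : Fin n → Bool) : Prop :=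
  ∃ t : ℕ, 1 ≤ t ∧ ∃ u : ℕ → Fin n → Bool, traj F U u x t = y

theorem traj_congr {F : Fin n → (Fin n → Bool) → Bool} {U : Finset (Fin n)}
    {u v : ℕ → Fin n → Bool} {x : Fin n → Bool} :
    ∀ {t : ℕ}, (∀ s < t, u s = v s) → traj F U u x t = traj F U v x t
  | 0, _ => rfl
  | t + 1, h => by
    simp only [traj]
    rw [traj_congr fun s hs => h s (hs.trans t.lt_succ_self), h t t.lt_succ_self]

theorem reaches_of_traj {F : Fin n → (Fin n → Bool) → Bool} {U : Finset (Fin n)}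
    (u : ℕ → Fin n → Bool) (x : Fin n → Bool) (t : ℕ) {z : Fin n → Bool}
    (hz : ∀ i ∉ U, z i = F i (traj F U u x t)) : Reaches F U x z := by
  refine ⟨t + 1, Nat.le_add_left _ _,
    Function.update u t fun i => Bool.xor (z i) (F i (traj F U u x t)), ?_⟩
  have hu : traj F U (Function.update u t fun i => Bool.xor (z i) (F i (traj F U u x t))) x t =
      traj F U u x t :=
    traj_congr fun s hs => Function.update_of_ne hs.ne _ _
  funext i
  simp only [traj, hu, Function.update_self]
  split_ifs with hi
  · simp
  · exact (hz i hi).symm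

theorem Reaches.step {F : Fin n → (Fin n → Bool) → Bool} {U : Finset (Fin n)}
    {x y z : Fin n → Bool} (h : Reaches F U x y) (hz : ∀ i ∉ U, z i = F i y) :
    Reaches F U x z := by
  obtain ⟨t, -, u, rfl⟩ := h
  exact reaches_of_traj u x t hz

/-- If the uncontrolled nodes induce an acyclic subnetwork, the all-ones state is reachable. -/
theorem reaches_true {S : Fin n → Finset (Fin n)} {U : Finset (Fin n)} {rank : Fin n → ℕ}
    (hrank : ∀ i ∉ U, ∀ j ∉ U, j ∈ S i → rank j < rank i) (x : Fin n → Bool) :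
    Reaches (fun i => andFun (S i)) U x fun _ => true := by
  have key : ∀ r : ℕ, ∃ y, Reaches (fun i => andFun (S i)) U x y ∧
      ∀ i, i ∈ U ∨ rank i < r → y i = true := fun r => by
    induction r with
    | zero =>
      refine ⟨fun i => if i ∈ U then true else andFun (S i) x,
        reaches_of_traj (fun _ _ => true) x 0 fun i hi => by simp [hi, traj], fun i hi => ?_⟩
      simp [hi.resolve_right (Nat.not_lt_zero _)]
    | succ r ih =>
      obtain ⟨y, hy, hyt⟩ := ih
      refine ⟨fun i => if i ∈ U then true else andFun (S i) y,
        hy.step fun i hi => by simp [hi], fun i hi => ?_⟩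
      by_cases hiU : i ∈ U
      · simp [hiU]
      · simp only [hiU, if_false, andFun_eq_true]
        intro j hj
        refine hyt j (or_iff_not_imp_left.mpr fun hjU => ?_)
        have h1 := hrank i hiU j hjU hj
        have h2 := hi.resolve_left hiU
        omega
  obtain ⟨y, hy, hyt⟩ := key (Finset.univ.sup rank + 1)
  have : y = fun _ => true := funext fun i =>
    hyt i (Or.inr (Nat.lt_succ_of_le (Finset.le_sup (Finset.mem_univ i))))
  exact this ▸ hy

/-- An AND-network is controllable from `U` if the uncontrolled nodes induce an acyclic
subnetwork and each of them has an input feeding no other uncontrolled node. -/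
theorem isControlSet_of_private {S : Fin n → Finset (Fin n)} {U : Finset (Fin n)}
    {rank : Fin n → ℕ} (hrank : ∀ i ∉ U, ∀ j ∉ U, j ∈ S i → rank j < rank i)
    (p : Fin n → Fin n) (hp : ∀ i ∉ U, p i ∈ S i)
    (hpriv : ∀ i ∉ U, ∀ j ∉ U, p i ∈ S j → j = i) :
    IsControlSet (fun i => andFun (S i)) U := by
  intro x
  have key : ∀ (r : ℕ) (z : Fin n → Bool), (∀ i ∉ U, z i = false → rank i < r) →
      Reaches (fun i => andFun (S i)) U x z := fun r => by
    induction r with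
    | zero =>
      intro z hz
      refine (reaches_true hrank x).step fun i hi => ?_
      rw [andFun_eq_true.mpr fun _ _ => rfl]
      by_contra h
      exact Nat.not_lt_zero _ (hz i hi (by simpa using h))
    | succ r ih =>
      intro z hz
      refine (ih (fun j => decide (∀ i ∉ U, z i = false → p i ≠ j)) fun j hj hjz => ?_).step
        fun i hi => ?_
      · obtain ⟨i, hi, hiz, rfl⟩ : ∃ i, i ∉ U ∧ z i = false ∧ p i = j := by simpa using hjz
        have h1 := hrank i hi _ hj (hp i hi)
        have h2 := hz i hi hiz
        omega
      · cases hzi : z i with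
        | false =>
          refine (andFun_eq_false.mpr ⟨p i, hp i hi, ?_⟩).symm
          simpa using ⟨i, hi, hzi, rfl⟩
        | true =>
          refine (andFun_eq_true.mpr fun j hj => ?_).symm
          refine decide_eq_true fun i' hi' hzi' hpj => ?_
          have := hpriv i' hi' i hi (hpj ▸ hj)
          simp [this, hzi'] at hzi
  intro z
  exact key (Finset.univ.sup rank + 1) z fun i _ _ =>
    Nat.lt_succ_of_le (Finset.le_sup (Finset.mem_univ i))

/-- Labels of the nodes: the `inl` labels and `inr none` stand for controlled nodes, the others for
uncontrolled ones. -/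
abbrev Label (M K : ℕ) : Type :=
  (Fin (M + 1) × Fin K) ⊕ Option (Fin (M + 1) × Fin (K + 1))

/-- A bipartite incidence relation (target, source) in which all degrees equal `K + 1`. -/
def incident {M K : ℕ} : Label M K → Label M K → Bool
  | .inl _, .inl _ => false
  | .inl a, .inr none => decide (a.1 = 0)
  | .inl a, .inr (some c) => decide (c.1 = a.1) && !decide (c.1 = 0 ∧ c.2 = a.2.castSucc)
  | .inr none, .inl _ => false
  | .inr none, .inr none => true
  | .inr none, .inr (some c) => decide (c.1 = 0) && !decide (c.2 = Fin.last K)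
  | .inr (some b), .inl a => decide (a.1 = b.1)
  | .inr (some _), .inr none => false
  | .inr (some b), .inr (some c) => decide (b = c)

theorem card_filter_label {M K : ℕ} (f : Label M K → Bool) :
    (Finset.univ.filter fun v => f v = true).card =
      (∑ b, ∑ j, (f (.inl (b, j))).toNat) +
        ((f (.inr none)).toNat + ∑ b, ∑ i, (f (.inr (some (b, i)))).toNat) := by
  have h : ∀ v, (if f v = true then 1 else 0) = (f v).toNat := fun v => by cases f v <;> rfl
  simp only [Finset.card_filter, h, Fintype.sum_sum_type, Fintype.sum_option,
    Fintype.sum_prod_type]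

theorem card_incident_row {M K : ℕ} (v : Label M K) :
    (Finset.univ.filter fun w => incident v w = true).card = K + 1 := by
  rw [card_filter_label]
  rcases v with ⟨a, j⟩ | _ | ⟨b, i⟩
  · by_cases ha : a = 0
    · subst ha
      simp [incident, Bool.toNat, Bool.cond_eq_ite, ite_and, Finset.filter_ne', add_comm]
    · simp [incident, Bool.toNat, Bool.cond_eq_ite, ite_and, ha]
  · simp [incident, Bool.toNat, Bool.cond_eq_ite, ite_and, Finset.sum_ite, Finset.filter_ne',
      add_comm]
  · simp [incident, Bool.toNat, Bool.cond_eq_ite, ite_and]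

theorem card_incident_column {M K : ℕ} (w : Label M K) :
    (Finset.univ.filter fun v => incident v w = true).card = K + 1 := by
  rw [card_filter_label]
  rcases w with ⟨a, j⟩ | _ | ⟨b, i⟩
  · simp [incident, Bool.toNat, Bool.cond_eq_ite]
  · simp [incident, Bool.toNat, Bool.cond_eq_ite]
  · by_cases hb : b = 0
    · subst hb
      induction i using Fin.lastCases with
      | last =>
        have h (x : Fin K) : Fin.last K ≠ x.castSucc := (Fin.castSucc_ne_last x).symm
        simp [incident, Bool.toNat, Bool.cond_eq_ite, ite_and, h]
      | cast i =>
        simp [incident, Bool.toNat, Bool.cond_eq_ite, ite_and, Finset.sum_ite, Finset.filter_ne,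
          Nat.sub_add_cancel i.pos]
    · simp [incident, Bool.toNat, Bool.cond_eq_ite, ite_and, hb]

/-- The backward cyclic shift on `Option α` along an enumeration starting at `none`. -/
theorem exists_shift (α : Type*) [Fintype α] :
    ∃ (σ : Option α ≃ Option α) (rank : Option α → ℕ), ∀ a, rank (σ (some a)) < rank (some a) := by
  let e : Option α ≃ Fin (Fintype.card α + 1) :=
    (Equiv.optionCongr (Fintype.equivFin α)).trans (finSuccEquiv _).symm
  refine ⟨(e.trans (finRotate _).symm).trans e.symm, fun o => e o, fun a => ?_⟩
  have he : e (some a) = (Fintype.equivFin α a).succ := by simp [e]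
  have hr : (finRotate _).symm (Fintype.equivFin α a).succ =
      (Fintype.equivFin α a).castSucc := by
    rw [Equiv.symm_apply_eq]
    ext
    simp
  simp [he, hr]

theorem exists_network {N M K : ℕ} (hN : N = Fintype.card (Label M K)) :
    ∃ S : Fin N → Finset (Fin N), (∀ i, (S i).card = K + 1) ∧
      (∀ j, (Finset.univ.filter fun i => j ∈ S i).card = K + 1) ∧
      ∃ U : Finset (Fin N), IsControlSet (fun i => andFun (S i)) U ∧
        U.card = K * (M + 1) + 1 := by
  classical
  obtain ⟨σ, rank, hσ⟩ := exists_shift (Fin (M + 1) × Fin (K + 1))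
  let φ : Fin N ≃ Label M K := (Fintype.equivFinOfCardEq hN.symm).symm
  let ψ : Fin N ≃ Label M K := φ.trans (Equiv.sumCongr (Equiv.refl _) σ.symm)
  let S : Fin N → Finset (Fin N) := fun i => Finset.univ.filter fun j => incident (φ i) (ψ j)
  let T : Finset (Label M K) := Finset.univ.filter fun v => ∀ b, v ≠ Sum.inr (some b)
  let U : Finset (Fin N) := T.map φ.symm.toEmbedding
  have hmem : ∀ i j, j ∈ S i ↔ incident (φ i) (ψ j) := fun i j => by simp [S]
  have hU : ∀ i ∉ U, ∃ b, φ i = Sum.inr (some b) := fun i hi => by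
    by_contra! h
    exact hi (Finset.mem_map.mpr ⟨φ i, by simpa [T] using fun a b => h (a, b), by simp⟩)
  refine ⟨S, fun i => ?_, fun j => ?_, U, ?_, ?_⟩
  · rw [← card_incident_row (φ i)]
    exact Finset.card_equiv ψ fun j => by simp [S]
  · rw [← card_incident_column (ψ j)]
    exact Finset.card_equiv φ fun i => by simp [hmem]
  · refine isControlSet_of_private (rank := fun i => Sum.elim (fun _ => 0) rank (φ i))
      (fun i hi j hj hij => ?_) (fun i => ψ.symm (φ i)) (fun i hi => ?_) fun i hi j hj hij => ?_
    · obtain ⟨b, hb⟩ := hU i hi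
      obtain ⟨c, hc⟩ := hU j hj
      rw [hmem] at hij
      simp only [ψ, Equiv.trans_apply, hb, hc, Equiv.sumCongr_apply, Sum.map_inr] at hij
      cases ho : σ.symm (some c) with
      | none => simp [ho, incident] at hij
      | some d =>
        simp only [ho, incident, decide_eq_true_eq] at hij
        rw [Equiv.symm_apply_eq] at ho
        simp only [hb, hc, Sum.elim_inr, hij, ho]
        exact hσ d
    · obtain ⟨b, hb⟩ := hU i hi
      simp [hmem, hb, incident]
    · obtain ⟨b, hb⟩ := hU i hi
      obtain ⟨c, hc⟩ := hU j hj
      rw [hmem, Equiv.apply_symm_apply, hb, hc] at hij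
      exact φ.injective (by rw [hb, hc, show c = b from of_decide_eq_true hij])
  · simp only [U, T, Finset.card_map, Finset.card_filter, Fintype.sum_sum_type,
      Fintype.sum_option]
    simp [mul_comm]

/-- For every `k ≥ 2` and `n = (2k−1)m + 1` with `m > 1`, there exists a
simple `k`-`k`-AND-BN on `n` nodes whose minimum control node set has size
`(k−1)m + 1`. -/
theorem stmt13 (k m : ℕ) (hk : 2 ≤ k) (hm : 1 < m) :
    ∃ F : Fin ((2 * k - 1) * m + 1) → (Fin ((2 * k - 1) * m + 1) → Bool) → Bool,
      IsSimpleKKAndBN k F ∧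
      (∃ U : Finset (Fin ((2 * k - 1) * m + 1)),
        IsControlSet F U ∧ U.card = (k - 1) * m + 1) ∧
      ∀ U : Finset (Fin ((2 * k - 1) * m + 1)),
        IsControlSet F U → (k - 1) * m + 1 ≤ U.card := by
  obtain ⟨K, rfl⟩ := Nat.exists_eq_add_of_le' (one_le_two.trans hk)
  obtain ⟨M, rfl⟩ := Nat.exists_eq_add_of_le' hm.le
  have hN : (2 * (K + 1) - 1) * (M + 1) + 1 = Fintype.card (Label M K) := by
    simp only [Fintype.card_sum, Fintype.card_prod, Fintype.card_option, Fintype.card_fin]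
    rw [show 2 * (K + 1) - 1 = 2 * K + 1 by omega]
    ring
  obtain ⟨S, hin, hout, U, hU, hcard⟩ := exists_network hN
  refine ⟨fun i => andFun (S i), isSimpleKKAndBN_andFun hin hout, ⟨U, hU, hcard⟩, fun V hV => ?_⟩
  have h := hV.card_compl_mul_le hin hout
  have hc := Finset.card_add_card_compl V
  simp only [Fintype.card_fin, show 2 * (K + 1) - 1 = 2 * K + 1 by omega] at hc
  rw [Nat.add_sub_cancel]
  by_contra! hlt
  have h1 : V.card ≤ K * (M + 1) := Nat.lt_succ_iff.mp hlt
  nlinarith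

end BN
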